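/- Let F be a field with 2 ≠ 0, n ≥ 1, ξ ∈ Fˣ, and let y ∈ Mₙ(F) be a matrix with 1 − y invertible; set γ := ξ·(1 + y)·(1 − y)⁻¹. Then for every vector e ∈ Fⁿ, the linear span of {y^i·e : 0 ≤ i ≤ n−1} equals the linear span of {γ^i·e : 0 ≤ i ≤ n−1}. In particular, the family (e, y·e, …, y^{n−1}·e) is linearly independent if and only if the family (e, γ·e, …, γ^{n−1}·e) is linearly independent; hence the Cayley transform preserves regular semisimplicity. -/

import Mathlib

open Matrix

/-!
Two elements generating the same subalgebra `R[y] = R[γ]` have the same Krylov spans: by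
Cayley–Hamilton, the vectors `y ^ i e` with `i` below the matrix size span `R[y] e`. An inverse `w`
of `x` that is integral lies in `R[x]`: multiply an equation expressing `w ^ (d + 1)` through lower
powers of `w` by `x ^ d`. So `γ ∈ R[y]`; conversely `γ + ξ = 2ξ(1 - y)⁻¹` puts `(1 - y)⁻¹`, hence
its inverse `1 - y`, in `R[γ]`. Linear independence of a finite family depends only on its size and
its span.
-/

open Polynomial
open scoped Ring

theorem linearIndependent_iff_of_span_range_eq {R M κ : Type*} [Semiring R] [OrzechProperty R]
    [AddCommMonoid M] [Module R M] [Finite κ] {v w : κ → M}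
    (h : Submodule.span R (Set.range v) = Submodule.span R (Set.range w)) :
    LinearIndependent R v ↔ LinearIndependent R w := by
  cases nonempty_fintype κ
  cases subsingleton_or_nontrivial R
  · have := Module.subsingleton R M
    rw [Subsingleton.elim v w]
  · rw [linearIndependent_iff_card_eq_finrank_span, linearIndependent_iff_card_eq_finrank_span,
      Set.finrank, Set.finrank, h]

section Algebra

variable {R A : Type*} [CommRing R]

theorem span_range_pow_eq_adjoin [Semiring A] [Algebra R A] {x : A} {f : R[X]} (hf : f.Monic)
    (hfx : aeval x f = 0) {m : ℕ} (hm : f.natDegree ≤ m) :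
    Submodule.span R (Set.range fun i : Fin m => x ^ (i : ℕ)) =
      Subalgebra.toSubmodule (Algebra.adjoin R {x}) := by
  classical
  apply le_antisymm
  · rw [Submodule.span_le]
    rintro _ ⟨i, rfl⟩
    exact pow_mem (Algebra.self_mem_adjoin_singleton R x) _
  · rw [← Submodule.span_range_natDegree_eq_adjoin hf hfx]
    apply Submodule.span_mono
    intro z hz
    obtain ⟨i, hi, rfl⟩ := Finset.mem_image.mp hz
    exact ⟨⟨i, (Finset.mem_range.mp hi).trans_le hm⟩, rfl⟩

variable [Ring A] [Algebra R A]

theorem mem_subalgebra_of_mul_eq_one (S : Subalgebra R A) {x w : A} (hx : x ∈ S)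
    (hxw : x * w = 1) (hw : IsIntegral R w) : w ∈ S := by
  obtain ⟨f, hf, hfw⟩ := hw
  set d := f.natDegree
  have hpow : w ^ (d + 1) ∈ Submodule.span R (Set.range fun i : Fin (d + 1) => w ^ (i : ℕ)) := by
    rw [span_range_pow_eq_adjoin hf hfw d.le_succ]
    exact pow_mem (Algebra.self_mem_adjoin_singleton R w) _
  have hshift : Submodule.span R (Set.range fun i : Fin (d + 1) => w ^ (i : ℕ)) ≤
      (Subalgebra.toSubmodule S).comap (LinearMap.mulLeft R (x ^ d)) := by
    rw [Submodule.span_le]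
    rintro _ ⟨i, rfl⟩
    have hcancel : x ^ d * w ^ (i : ℕ) = x ^ (d - i) := by
      rw [← pow_sub_mul_pow x i.is_le, mul_assoc, pow_mul_pow_eq_one _ hxw, mul_one]
    simpa [hcancel] using pow_mem hx (d - i)
  have hpow_eq : x ^ d * w ^ (d + 1) = w := by
    rw [pow_succ, ← mul_assoc, pow_mul_pow_eq_one _ hxw, one_mul]
  simpa [hpow_eq] using hshift hpow

/-- The Cayley transform `ξ (1 + y) (1 - y)⁻¹` on an algebra. The inverse is `Ring.inverse`, so the
value is `0` when `1 - y` is not a unit. -/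
noncomputable def cayleyTransform (ξ : R) (y : A) : A :=
  ξ • ((1 + y) * (1 - y)⁻¹ʳ)

theorem cayleyTransform_mem_adjoin (ξ : R) {y : A} (hy : IsUnit (1 - y))
    (hint : IsIntegral R (1 - y)⁻¹ʳ) : cayleyTransform ξ y ∈ Algebra.adjoin R {y} := by
  have hmem : y ∈ Algebra.adjoin R {y} := Algebra.self_mem_adjoin_singleton R y
  have hinv : (1 - y)⁻¹ʳ ∈ Algebra.adjoin R {y} :=
    mem_subalgebra_of_mul_eq_one _ (sub_mem (one_mem _) hmem) (Ring.mul_inverse_cancel _ hy) hint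
  exact Subalgebra.smul_mem _ (mul_mem (add_mem (one_mem _) hmem) hinv) ξ

theorem cayleyTransform_add_algebraMap (ξ : R) {y : A} (hy : IsUnit (1 - y)) :
    cayleyTransform ξ y + algebraMap R A ξ = (2 * ξ) • (1 - y)⁻¹ʳ := by
  calc cayleyTransform ξ y + algebraMap R A ξ
      = ξ • ((1 + y) * (1 - y)⁻¹ʳ) + ξ • ((1 - y) * (1 - y)⁻¹ʳ) := by
        rw [Ring.mul_inverse_cancel _ hy, ← Algebra.algebraMap_eq_smul_one, cayleyTransform]
    _ = ξ • (((1 + y) + (1 - y)) * (1 - y)⁻¹ʳ) := by rw [← smul_add, ← add_mul]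
    _ = (2 * ξ) • (1 - y)⁻¹ʳ := by
        rw [add_add_sub_cancel, one_add_one_eq_two, two_mul, ← two_smul R, smul_smul, mul_comm]

theorem mem_adjoin_cayleyTransform {ξ : R} (hξ : IsUnit (2 * ξ)) {y : A} (hy : IsUnit (1 - y))
    (hint : IsIntegral R y) : y ∈ Algebra.adjoin R {cayleyTransform ξ y} := by
  set S := Algebra.adjoin R {cayleyTransform ξ y}
  have hscaled : (2 * ξ) • (1 - y)⁻¹ʳ ∈ S := by
    rw [← cayleyTransform_add_algebraMap ξ hy]
    exact add_mem (Algebra.self_mem_adjoin_singleton R _) (S.algebraMap_mem ξ)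
  have hinv : (1 - y)⁻¹ʳ ∈ S := (Submodule.smul_mem_iff_of_isUnit S.toSubmodule hξ).mp hscaled
  have hint_sub : IsIntegral R (1 - y) := .of_mem_of_fg _ hint.fg_adjoin_singleton _
    (sub_mem (one_mem _) (Algebra.self_mem_adjoin_singleton R y))
  have hsub : 1 - y ∈ S :=
    mem_subalgebra_of_mul_eq_one S hinv (Ring.inverse_mul_cancel _ hy) hint_sub
  simpa using sub_mem (one_mem S) hsub

theorem adjoin_cayleyTransform {ξ : R} (hξ : IsUnit (2 * ξ)) {y : A} (hy : IsUnit (1 - y))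
    (hint : IsIntegral R y) (hint_inv : IsIntegral R (1 - y)⁻¹ʳ) :
    Algebra.adjoin R {cayleyTransform ξ y} = Algebra.adjoin R {y} :=
  le_antisymm (Algebra.adjoin_singleton_le (cayleyTransform_mem_adjoin ξ hy hint_inv))
    (Algebra.adjoin_singleton_le (mem_adjoin_cayleyTransform hξ hy hint))

end Algebra

section Krylov

variable {R ι : Type*} [CommRing R] [Fintype ι] [DecidableEq ι] {m : ℕ}

theorem span_range_pow_mulVec (hm : Fintype.card ι ≤ m) (y : Matrix ι ι R) (e : ι → R) :
    Submodule.span R (Set.range fun i : Fin m => y ^ (i : ℕ) *ᵥ e) =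
      (Subalgebra.toSubmodule (Algebra.adjoin R {y})).map ((mulVecBilin R R).flip e) := by
  nontriviality R
  have hdeg : y.charpoly.natDegree ≤ m := y.charpoly_natDegree_eq_dim.trans_le hm
  rw [← span_range_pow_eq_adjoin y.charpoly_monic y.aeval_self_charpoly hdeg, Submodule.map_span,
    ← Set.range_comp]
  rfl

theorem cayley_transform_preserves_krylov_span_general (hm : Fintype.card ι ≤ m) {ξ : R}
    (hξ : IsUnit (2 * ξ)) {y : Matrix ι ι R} (hy : IsUnit (1 - y)) (e : ι → R) :
    Submodule.span R (Set.range fun i : Fin m => y ^ (i : ℕ) *ᵥ e) =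
        Submodule.span R (Set.range fun i : Fin m => cayleyTransform ξ y ^ (i : ℕ) *ᵥ e) ∧
      (LinearIndependent R (fun i : Fin m => y ^ (i : ℕ) *ᵥ e) ↔
        LinearIndependent R (fun i : Fin m => cayleyTransform ξ y ^ (i : ℕ) *ᵥ e)) := by
  have hspan : Submodule.span R (Set.range fun i : Fin m => y ^ (i : ℕ) *ᵥ e) =
      Submodule.span R (Set.range fun i : Fin m => cayleyTransform ξ y ^ (i : ℕ) *ᵥ e) := by
    rw [span_range_pow_mulVec hm, span_range_pow_mulVec hm,
      adjoin_cayleyTransform hξ hy y.isIntegral (Matrix.isIntegral _)]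
  exact ⟨hspan, linearIndependent_iff_of_span_range_eq hspan⟩

end Krylov

/-- The Cayley transform preserves Krylov spans: for `γ = ξ(1+y)(1-y)⁻¹`, the span of
`e, y e, …, y^{n-1} e` equals the span of `e, γ e, …, γ^{n-1} e`, and the first family is
linearly independent iff the second one is; hence the Cayley transform preserves
regular semisimplicity. -/
theorem cayley_transform_preserves_krylov_span
    (F : Type*) [Field F] (h2 : (2 : F) ≠ 0)
    (n : ℕ) (hn : 1 ≤ n) (ξ : F) (hξ : ξ ≠ 0)
    (y : Matrix (Fin n) (Fin n) F) (hy : IsUnit (1 - y)) :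
    let γ : Matrix (Fin n) (Fin n) F := ξ • ((1 + y) * (1 - y)⁻¹)
    ∀ e : Fin n → F,
      Submodule.span F (Set.range fun i : Fin n => (y ^ (i : ℕ)).mulVec e)
        = Submodule.span F (Set.range fun i : Fin n => (γ ^ (i : ℕ)).mulVec e) ∧
      (LinearIndependent F (fun i : Fin n => (y ^ (i : ℕ)).mulVec e) ↔
        LinearIndependent F (fun i : Fin n => (γ ^ (i : ℕ)).mulVec e)) := by
  simpa only [cayleyTransform, ← nonsing_inv_eq_ringInverse] using
    cayley_transform_preserves_krylov_span_general (Fintype.card_fin n).le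
      (mul_ne_zero h2 hξ).isUnit hy
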